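/- arXiv:2311.09391 — 4 statements merged into one kernel-verified Lean document; each statement's English description precedes it below -/
import Mathlib

section
/- Let f, g: (D_*, C_*) → (D'_*, C'_*) be morphisms of embedded complexes that are homotopic, i.e. f − g = dh + hd for some embedded map h of degree 1. Then f and g map Inf_n(D_*,C_*) into Inf_n(D'_*,C'_*), their restrictions f♭, g♭: Inf_*(D_*,C_*) → Inf_*(D'_*,C'_*) are chain homotopic via the restriction of h (which maps Inf_n(D_*,C_*) into Inf_{n+1}(D'_*,C'_*)), and consequently the induced maps on embedded homology agree: H_n(f) = H_n(g): H_n(D_*,C_*) → H_n(D'_*,C'_*) for every n ≥ 0. -/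
/-- The infimum chain complex of an embedded complex `(D_*, C_*)`:
`Inf_n(D_*, C_*) = {x ∈ D_n : d x ∈ D_{n-1}}` (with `Inf_0 = D_0`). -/
def infCpx {R : Type*} [CommRing R] {C : ℕ → Type*}
    [∀ n, AddCommGroup (C n)] [∀ n, Module R (C n)]
    (d : ∀ n, C (n + 1) →ₗ[R] C n) (D : ∀ n, Submodule R (C n)) :
    ∀ n, Submodule R (C n)
  | 0 => D 0
  | (n + 1) => D (n + 1) ⊓ Submodule.comap (d n) (D n)

section InfimumComplex

variable {R : Type*} [CommRing R] {C C' : ℕ → Type*}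
  [∀ n, AddCommGroup (C n)] [∀ n, Module R (C n)]
  [∀ n, AddCommGroup (C' n)] [∀ n, Module R (C' n)]
  {d : ∀ n, C (n + 1) →ₗ[R] C n} {d' : ∀ n, C' (n + 1) →ₗ[R] C' n}
  {D : ∀ n, Submodule R (C n)} {D' : ∀ n, Submodule R (C' n)}

theorem mem_infCpx_succ {n : ℕ} {x : C (n + 1)} :
    x ∈ infCpx d D (n + 1) ↔ x ∈ D (n + 1) ∧ d n x ∈ D n :=
  Iff.rfl

theorem infCpx_le : ∀ n, infCpx d D n ≤ D n
  | 0 => le_rfl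
  | _ + 1 => inf_le_left

theorem map_mem_infCpx {f : ∀ n, C n →ₗ[R] C' n}
    (hf : ∀ n (x : C (n + 1)), d' n (f (n + 1) x) = f n (d n x))
    (hfD : ∀ n, ∀ x ∈ D n, f n x ∈ D' n) :
    ∀ n, ∀ x ∈ infCpx d D n, f n x ∈ infCpx d' D' n
  | 0, x, hx => hfD 0 x hx
  | n + 1, x, hx => by
    obtain ⟨hxD, hdxD⟩ := mem_infCpx_succ.mp hx
    have hdfx : d' n (f (n + 1) x) ∈ D' n := (hf n x).symm ▸ hfD n (d n x) hdxD
    exact mem_infCpx_succ.mpr ⟨hfD (n + 1) x hxD, hdfx⟩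

/-- `h` is a null homotopy of the graded map `φ`, i.e. `φ = d'h + hd`, so that a homotopy from
`f` to `g` is a null homotopy of `f - g`. Degree `0` is separate because the differential leaving
it is zero and is not part of `d`. -/
structure IsNullHomotopy (d : ∀ n, C (n + 1) →ₗ[R] C n) (d' : ∀ n, C' (n + 1) →ₗ[R] C' n)
    (h : ∀ n, C n →ₗ[R] C' (n + 1)) (φ : ∀ n, C n →ₗ[R] C' n) : Prop where
  zero (x : C 0) : φ 0 x = d' 0 (h 0 x)
  succ (n : ℕ) (x : C (n + 1)) : φ (n + 1) x = d' (n + 1) (h (n + 1) x) + h n (d n x)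

namespace IsNullHomotopy

variable {h : ∀ n, C n →ₗ[R] C' (n + 1)} {φ : ∀ n, C n →ₗ[R] C' n}

theorem d_apply_of_d_eq_zero (hφ : IsNullHomotopy d d' h φ) {n : ℕ} {x : C (n + 1)}
    (hx : d n x = 0) : d' (n + 1) (h (n + 1) x) = φ (n + 1) x := by
  rw [hφ.succ, hx, map_zero, add_zero]

-- On `Inf` both `x` and `d x` lie in `D`, hence so do both terms of `d'h x = φ x - h (d x)`.
theorem d_apply_mem (hφ : IsNullHomotopy d d' h φ) (hφD : ∀ n, ∀ x ∈ D n, φ n x ∈ D' n)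
    (hhD : ∀ n, ∀ x ∈ D n, h n x ∈ D' (n + 1)) :
    ∀ n, ∀ x ∈ infCpx d D n, d' n (h n x) ∈ D' n
  | 0, x, hx => hφ.zero x ▸ hφD 0 x hx
  | n + 1, x, hx => by
    obtain ⟨hxD, hdxD⟩ := mem_infCpx_succ.mp hx
    rw [eq_sub_of_add_eq (hφ.succ n x).symm]
    exact sub_mem (hφD (n + 1) x hxD) (hhD n (d n x) hdxD)

theorem apply_mem_infCpx (hφ : IsNullHomotopy d d' h φ)
    (hφD : ∀ n, ∀ x ∈ D n, φ n x ∈ D' n) (hhD : ∀ n, ∀ x ∈ D n, h n x ∈ D' (n + 1))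
    (n : ℕ) (x : C n) (hx : x ∈ infCpx d D n) : h n x ∈ infCpx d' D' (n + 1) :=
  mem_infCpx_succ.mpr ⟨hhD n x (infCpx_le n hx), hφ.d_apply_mem hφD hhD n x hx⟩

end IsNullHomotopy

end InfimumComplex

/-- Let `f, g : (D_*, C_*) → (D'_*, C'_*)` be morphisms of embedded
complexes which are homotopic via an embedded map `h` of degree `1` (so
`f - g = d'h + hd` and `h(D_n) ⊆ D'_{n+1}`).  Then `f` and `g` map
`Inf_n(D_*, C_*)` into `Inf_n(D'_*, C'_*)`, the degree-one map `h` maps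
`Inf_n(D_*, C_*)` into `Inf_{n+1}(D'_*, C'_*)` (so the restrictions `f♭, g♭` are chain
homotopic via the restriction of `h`), and consequently the induced maps on embedded
homology agree: for every cycle `x` of `Inf_*(D_*, C_*)` the difference
`f x - g x` is the boundary of an element of `Inf_{*+1}(D'_*, C'_*)`, i.e.
`H_n(f) = H_n(g)` for every `n ≥ 0`. -/
theorem statement1 {R : Type*} [CommRing R] {C C' : ℕ → Type*}
    [∀ n, AddCommGroup (C n)] [∀ n, Module R (C n)]
    [∀ n, AddCommGroup (C' n)] [∀ n, Module R (C' n)]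
    (d : ∀ n, C (n + 1) →ₗ[R] C n) (d' : ∀ n, C' (n + 1) →ₗ[R] C' n)
    (hd : ∀ n (x : C (n + 2)), d n (d (n + 1) x) = 0)
    (hd' : ∀ n (x : C' (n + 2)), d' n (d' (n + 1) x) = 0)
    (D : ∀ n, Submodule R (C n)) (D' : ∀ n, Submodule R (C' n))
    (f g : ∀ n, C n →ₗ[R] C' n)
    (hf : ∀ n (x : C (n + 1)), d' n (f (n + 1) x) = f n (d n x))
    (hg : ∀ n (x : C (n + 1)), d' n (g (n + 1) x) = g n (d n x))
    (hfD : ∀ n, ∀ x ∈ D n, f n x ∈ D' n)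
    (hgD : ∀ n, ∀ x ∈ D n, g n x ∈ D' n)
    (h : ∀ n, C n →ₗ[R] C' (n + 1))
    (hhD : ∀ n, ∀ x ∈ D n, h n x ∈ D' (n + 1))
    (hhom0 : ∀ x : C 0, f 0 x - g 0 x = d' 0 (h 0 x))
    (hhom : ∀ n (x : C (n + 1)),
      f (n + 1) x - g (n + 1) x = d' (n + 1) (h (n + 1) x) + h n (d n x)) :
    (∀ n, ∀ x ∈ infCpx d D n, f n x ∈ infCpx d' D' n) ∧
    (∀ n, ∀ x ∈ infCpx d D n, g n x ∈ infCpx d' D' n) ∧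
    (∀ n, ∀ x ∈ infCpx d D n, h n x ∈ infCpx d' D' (n + 1)) ∧
    (∀ x ∈ infCpx d D 0, ∃ y ∈ infCpx d' D' 1, d' 0 y = f 0 x - g 0 x) ∧
    (∀ n, ∀ x ∈ infCpx d D (n + 1), d n x = 0 →
      ∃ y ∈ infCpx d' D' (n + 2), d' (n + 1) y = f (n + 1) x - g (n + 1) x) := by
  have hnull : IsNullHomotopy d d' h (fun n => f n - g n) := ⟨hhom0, hhom⟩
  have hsubD : ∀ n, ∀ x ∈ D n, (f n - g n) x ∈ D' n := fun n x hx =>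
    sub_mem (hfD n x hx) (hgD n x hx)
  have hInf : ∀ n, ∀ x ∈ infCpx d D n, h n x ∈ infCpx d' D' (n + 1) :=
    hnull.apply_mem_infCpx hsubD hhD
  refine ⟨map_mem_infCpx hf hfD, map_mem_infCpx hg hgD, hInf, ?_, ?_⟩
  · intro x hx
    exact ⟨h 0 x, hInf 0 x hx, (hhom0 x).symm⟩
  · intro n x hx hdx
    exact ⟨h (n + 1) x, hInf (n + 1) x hx, hnull.d_apply_of_d_eq_zero hdx⟩
end

section
/- Let H be a hypergraph on a finite vertex set V and let K be an abstract simplicial complex on V with H ⊆ K. Then H(P(ΔH), H) = H(P(K), H), where P(ΔH) and P(K) are the inclusion posets of simplices of ΔH and of K respectively, each graded by ρ(σ) = |σ| − 1 and marked by the subset H. In particular, the hypergraph construction on (P(K), H) does not depend on the choice of the simplicial complex K containing H. -/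
section Hypergraph

variable {V : Type*} [DecidableEq V]

/-- The simplicial closure `ΔH` of a hypergraph `H`: all nonempty subsets of hyperedges. -/
def clos (H : Set (Finset V)) : Set (Finset V) :=
  {τ | τ.Nonempty ∧ ∃ σ ∈ H, τ ⊆ σ}

/-- A nonempty strict chain `σ₀ ⊊ σ₁ ⊊ ⋯ ⊊ σₙ` of elements of `A`: an element of the
poset `N(P(A))` of chains of the poset `P(A)` of elements of `A` ordered by inclusion. -/
def IsChainIn (A : Set (Finset V)) (l : List (Finset V)) : Prop :=
  l ≠ [] ∧ l.Pairwise (· ⊂ ·) ∧ ∀ τ ∈ l, τ ∈ A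

/-- The order on chains: chains of the same length are compared componentwise. -/
def chainLE (l l' : List (Finset V)) : Prop := List.Forall₂ (· ⊆ ·) l l'

/-- The strict order on chains. -/
def chainLT (l l' : List (Finset V)) : Prop := chainLE l l' ∧ l ≠ l'

/-- Membership in `N(P(A), M)`: a chain of elements of `A` whose greatest entry is in `M`. -/
def memN (A M : Set (Finset V)) (l : List (Finset V)) : Prop :=
  IsChainIn A l ∧ ∃ h : l ≠ [], l.getLast h ∈ M

/-- The covering relation in the poset `N(P(A))` of chains. -/
def covN (A : Set (Finset V)) (l' l : List (Finset V)) : Prop :=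
  IsChainIn A l' ∧ IsChainIn A l ∧ chainLT l' l ∧
    ¬∃ u : List (Finset V), IsChainIn A u ∧ chainLT l' u ∧ chainLT u l

/-- `M`-successive elements: the minimal elements of `N(P(A), M)`. -/
def isSucc (A M : Set (Finset V)) (l : List (Finset V)) : Prop :=
  memN A M l ∧ ∀ l' : List (Finset V), memN A M l' → ¬ chainLT l' l

/-- The hypergraph construction `H(P(A), M)` on the marked poset `(P(A), M)`, defined
inductively: a chain belongs to it if it lies in `N(P(A), M)` and either is
`M`-successive or all chains covered by it belong to it. -/
inductive hypConIn (A M : Set (Finset V)) : List (Finset V) → Prop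
  | of_succ (l : List (Finset V)) (h : isSucc A M l) : hypConIn A M l
  | of_cov (l : List (Finset V)) (hm : memN A M l)
      (h : ∀ l' : List (Finset V), covN A l' l → hypConIn A M l') : hypConIn A M l

/-- An abstract simplicial complex on the vertex set `V`. -/
def IsComplex (K : Set (Finset V)) : Prop :=
  (∀ σ ∈ K, σ.Nonempty) ∧ ∀ σ ∈ K, ∀ τ : Finset V, τ.Nonempty → τ ⊆ σ → τ ∈ K

end Hypergraph

/-!
Both construction rules at a chain `l ∈ N(P(A), M)` involve only chains componentwise below `l`. The
entries of such chains lie below the greatest entry of `l`, which is marked. Hence `H(P(A), M)`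
depends on `A` only through `A ∩ ↓M`, and for a complex `K ⊇ H` both `ΔH` and `K` meet `↓H` in the
nonempty subsets of hyperedges.
-/

section LowerClosure

theorem exists_mem_rel_of_forall₂ {α β : Type*} {R : α → β → Prop} {l₁ : List α} {l₂ : List β}
    (h : List.Forall₂ R l₁ l₂) {a : α} (ha : a ∈ l₁) : ∃ b ∈ l₂, R a b := by
  obtain ⟨i, rfl⟩ := List.get_of_mem ha
  have hi : (i : ℕ) < l₂.length := h.length_eq ▸ i.2
  exact ⟨l₂.get ⟨i, hi⟩, List.get_mem .., h.get i.2 hi⟩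

variable {V : Type*} {A B M : Set (Finset V)} {l l' : List (Finset V)} {τ : Finset V}

theorem IsChainIn.subset_getLast (hl : IsChainIn A l) (hτ : τ ∈ l) : τ ⊆ l.getLast hl.1 :=
  (hl.2.1.imp LT.lt.subset).rel_getLast hτ

theorem memN.mem_lowerClosure (hl : memN A M l) (hτ : τ ∈ l) : τ ∈ lowerClosure M :=
  let ⟨hchain, _, hlast⟩ := hl
  ⟨_, hlast, hchain.subset_getLast hτ⟩

theorem memN.mem_lowerClosure_of_chainLE (hl : memN A M l) (hle : chainLE l' l) (hτ : τ ∈ l') :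
    τ ∈ lowerClosure M := by
  obtain ⟨σ, hσ, hτσ⟩ := exists_mem_rel_of_forall₂ hle hτ
  exact (lowerClosure M).lower hτσ (hl.mem_lowerClosure hσ)

theorem isChainIn_congr {S : Set (Finset V)} (h : A ∩ S = B ∩ S) (hS : ∀ τ ∈ l, τ ∈ S) :
    IsChainIn A l ↔ IsChainIn B l := by
  have hmem : ∀ τ ∈ l, (τ ∈ A ↔ τ ∈ B) := fun τ hτ => by
    simpa [hS τ hτ] using Set.ext_iff.1 h τ
  exact and_congr_right' (and_congr_right' (forall₂_congr hmem))

theorem memN.of_inter_lowerClosure_eq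
    (h : A ∩ lowerClosure M = B ∩ lowerClosure M) (hl : memN A M l) : memN B M l :=
  ⟨(isChainIn_congr h fun _ => hl.mem_lowerClosure).1 hl.1, hl.2⟩

theorem memN_congr (h : A ∩ lowerClosure M = B ∩ lowerClosure M) : memN A M l ↔ memN B M l :=
  ⟨.of_inter_lowerClosure_eq h, .of_inter_lowerClosure_eq h.symm⟩

theorem isSucc_congr (h : A ∩ lowerClosure M = B ∩ lowerClosure M) :
    isSucc A M l ↔ isSucc B M l := by
  simp only [isSucc, memN_congr h]

theorem covN.of_inter_lowerClosure_eq (h : A ∩ lowerClosure M = B ∩ lowerClosure M)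
    (hl : memN A M l) (hcov : covN A l' l) : covN B l' l := by
  have isChainIn_iff : ∀ {u}, chainLE u l → (IsChainIn A u ↔ IsChainIn B u) := fun hle =>
    isChainIn_congr h fun _ => hl.mem_lowerClosure_of_chainLE hle
  obtain ⟨hl', hchain, hlt, hbetween⟩ := hcov
  refine ⟨(isChainIn_iff hlt.1).1 hl', (isChainIn_iff (List.forall₂_refl l)).1 hchain, hlt, ?_⟩
  rintro ⟨u, hu, hl'u, hul⟩
  exact hbetween ⟨u, (isChainIn_iff hul.1).2 hu, hl'u, hul⟩

theorem hypConIn.of_inter_lowerClosure_eq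
    (h : A ∩ lowerClosure M = B ∩ lowerClosure M) (hl : hypConIn A M l) : hypConIn B M l := by
  induction hl with
  | of_succ l hsucc => exact .of_succ l ((isSucc_congr h).1 hsucc)
  | of_cov l hmem _ ih =>
    have hmem' : memN B M l := hmem.of_inter_lowerClosure_eq h
    exact .of_cov l hmem' fun l' hcov => ih l' (hcov.of_inter_lowerClosure_eq h.symm hmem')

theorem statement8_general (h : A ∩ lowerClosure M = B ∩ lowerClosure M) :
    hypConIn A M = hypConIn B M :=
  funext fun _ => propext ⟨.of_inter_lowerClosure_eq h, .of_inter_lowerClosure_eq h.symm⟩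

end LowerClosure

theorem clos_inter_lowerClosure {V : Type*} {H K : Set (Finset V)}
    (hK : IsComplex K) (hHK : H ⊆ K) : clos H ∩ lowerClosure H = K ∩ lowerClosure H := by
  apply Set.inter_congr_right
  · rintro τ ⟨hτ, hτH⟩
    exact ⟨hK.1 τ hτ, hτH⟩
  · rintro τ ⟨⟨hτ, σ, hσ, hτσ⟩, -⟩
    exact hK.2 σ (hHK hσ) τ hτ hτσ

/-- Let `H` be a hypergraph on a finite vertex set `V` and `K` an abstract
simplicial complex on `V` with `H ⊆ K`.  Then `H(P(ΔH), H) = H(P(K), H)`: the hypergraph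
construction does not depend on the choice of the simplicial complex `K` containing `H`. -/
theorem statement8 {V : Type*} [DecidableEq V] [Fintype V]
    (H K : Set (Finset V)) (hH : H.Nonempty) (hHne : ∀ σ ∈ H, σ.Nonempty)
    (hK : IsComplex K) (hHK : H ⊆ K) :
    hypConIn (clos H) H = hypConIn K H :=
  statement8_general (clos_inter_lowerClosure hK hHK)
end

section
/- For every hypergraph H, the simplicial closure of its subdivision equals the subdivision of its simplicial closure: Δ(sd(H)) = sd(ΔH). -/
/-!
Iterating the inductive definition, every chain of simplices of `K` lies in `sd(K)`, because the
chains below a given one have strictly smaller total cardinality. So the claim says that the chains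
contained in a hyperedge of `sd(H)` are exactly the chains of simplices of `ΔH`. Given such a
chain, its greatest entry lies in some `σ ∈ H`, and it refines to a chain from `∅` to `σ` all of
whose steps are covers. An entry of a saturated chain cannot be moved strictly down without falling
to the entry below it, so by induction from `∅` the refinement is minimal among all chains, that is,
`H`-successive.
-/

section SaturatedChains

variable {α : Type*} [PartialOrder α]

theorem eq_of_forall₂_le_of_isChain_covBy {a : α} {l' l : List α} (hle : List.Forall₂ (· ≤ ·) l' l)
    (hl' : List.IsChain (· < ·) (a :: l')) (hl : List.IsChain (· ⋖ ·) (a :: l)) : l' = l := by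
  induction hle generalizing a with
  | nil => rfl
  | @cons b' b l' l hb _ ih =>
    rw [List.isChain_cons_cons] at hl' hl
    obtain rfl : b' = b := (hl.1.eq_or_eq hl'.1.le hb).resolve_left hl'.1.ne'
    rw [ih hl'.2 hl.2]

theorem exists_isChain_covBy_cons_sublist [LocallyFiniteOrder α] {a b : α} {l : List α}
    (hl : List.IsChain (· < ·) (a :: l)) (hb : (a :: l).getLast (List.cons_ne_nil a l) ≤ b) :
    ∃ l' : List α, List.IsChain (· ⋖ ·) (a :: l') ∧
      (a :: l').getLast (List.cons_ne_nil a l') = b ∧ l.Sublist l' := by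
  induction l generalizing a with
  | nil =>
    obtain ⟨m, hm, hmb⟩ :=
      List.exists_isChain_cons_of_relationReflTransGen (le_iff_reflTransGen_covBy.1 hb)
    exact ⟨m, hm, hmb, m.nil_sublist⟩
  | cons c l ih =>
    rw [List.isChain_cons_cons] at hl
    obtain ⟨r, hr, hrb, hlr⟩ := ih hl.2 (by rwa [List.getLast_cons_cons] at hb)
    obtain ⟨m, hm, hmc⟩ :=
      List.exists_isChain_cons_of_relationReflTransGen (le_iff_reflTransGen_covBy.1 hl.1.le)
    rcases m.eq_nil_or_concat' with rfl | ⟨m, d, rfl⟩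
    · exact absurd hmc hl.1.ne
    · obtain rfl : d = c := (List.getLast_append_singleton (a :: m)).symm.trans hmc
      refine ⟨m ++ d :: r, List.isChain_cons_split.2 ⟨hm, hr⟩, ?_, ?_⟩
      · exact (List.getLast_append_of_right_ne_nil (a :: m) (d :: r) (by simp)).trans hrb
      · exact (hlr.cons_cons d).trans (List.sublist_append_right m (d :: r))

end SaturatedChains

section Hypergraph

variable {V : Type*}

theorem clos_clos (H : Set (Finset V)) : clos (clos H) = clos H := by
  ext τ
  constructor
  · rintro ⟨hτ, ρ, ⟨-, σ, hσ, hρσ⟩, hτρ⟩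
    exact ⟨hτ, σ, hσ, hτρ.trans hρσ⟩
  · intro hτ
    exact ⟨hτ.1, τ, hτ, subset_rfl⟩

theorem isChainIn_of_sublist {A : Set (Finset V)} {l l' : List (Finset V)}
    (hl' : IsChainIn A l') (hsub : l.Sublist l') (hl : l ≠ []) : IsChainIn A l :=
  ⟨hl, hl'.2.1.sublist hsub, fun τ hτ => hl'.2.2 τ (hsub.subset hτ)⟩

theorem memN_of_hypConIn {A M : Set (Finset V)} {l : List (Finset V)}
    (h : hypConIn A M l) : memN A M l := by
  cases h with
  | of_succ _ hsucc => exact hsucc.1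
  | of_cov _ hmem _ => exact hmem

theorem sum_card_lt_of_chainLT {l' l : List (Finset V)} (h : chainLT l' l) :
    (l'.map Finset.card).sum < (l.map Finset.card).sum := by
  obtain ⟨hle, hne⟩ := h
  induction hle with
  | nil => exact absurd rfl hne
  | @cons τ σ l' l hτσ hle ih =>
    simp only [List.map_cons, List.sum_cons]
    rcases hτσ.eq_or_ssubset with rfl | hlt
    · exact Nat.add_lt_add_left (ih fun h => hne (h ▸ rfl)) _
    · have htail : (l'.map Finset.card).sum ≤ (l.map Finset.card).sum :=
        List.Forall₂.sum_le_sum (List.forall₂_map_left_iff.2 <| List.forall₂_map_right_iff.2 <|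
          hle.imp fun _ _ => Finset.card_le_card)
      exact Nat.add_lt_add_of_lt_of_le (Finset.card_lt_card hlt) htail

theorem hypConIn_of_isChainIn {A M : Set (Finset V)} (hAM : A ⊆ M) {l : List (Finset V)}
    (hl : IsChainIn A l) : hypConIn A M l :=
  .of_cov l ⟨hl, hl.1, hAM (hl.2.2 _ (List.getLast_mem hl.1))⟩ fun _ hcov =>
    hypConIn_of_isChainIn hAM hcov.1
termination_by (l.map Finset.card).sum
decreasing_by exact sum_card_lt_of_chainLT hcov.2.2.1

theorem hypConIn_iff_isChainIn {A M : Set (Finset V)} (hAM : A ⊆ M) {l : List (Finset V)} :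
    hypConIn A M l ↔ IsChainIn A l :=
  ⟨fun h => (memN_of_hypConIn h).1, hypConIn_of_isChainIn hAM⟩

theorem isChain_lt_empty_cons {A : Set (Finset V)} (hA : ∀ σ ∈ A, σ.Nonempty)
    {l : List (Finset V)} (hl : IsChainIn A l) : List.IsChain (· < ·) (∅ :: l) :=
  List.isChain_iff_pairwise.2 <|
    List.pairwise_cons.2 ⟨fun τ hτ => (hA τ (hl.2.2 τ hτ)).empty_ssubset, hl.2.1⟩

theorem isSucc_of_isChain_covBy {A M : Set (Finset V)} (hA : ∀ σ ∈ A, σ.Nonempty)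
    {l : List (Finset V)} (hl : memN A M l) (hcov : List.IsChain (· ⋖ ·) (∅ :: l)) :
    isSucc A M l :=
  ⟨hl, fun _ hl' hlt =>
    hlt.2 (eq_of_forall₂_le_of_isChain_covBy hlt.1 (isChain_lt_empty_cons hA hl'.1) hcov)⟩

theorem memN_clos_of_isChain_lt_empty_cons {H : Set (Finset V)} {l : List (Finset V)}
    (hl : List.IsChain (· < ·) (∅ :: l)) (hne : l ≠ []) (hlast : l.getLast hne ∈ H) :
    memN (clos H) H l := by
  obtain ⟨hpos, hstrict⟩ := List.pairwise_cons.1 (List.isChain_iff_pairwise.1 hl)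
  refine ⟨⟨hne, hstrict, fun τ hτ => ⟨?_, l.getLast hne, hlast, ?_⟩⟩, hne, hlast⟩
  · exact Finset.empty_ssubset.1 (hpos τ hτ)
  · exact (hstrict.imp fun h => h.subset).rel_getLast hτ

theorem exists_isSucc_sublist {H : Set (Finset V)} {l : List (Finset V)}
    (hl : IsChainIn (clos H) l) : ∃ l', isSucc (clos H) H l' ∧ l.Sublist l' := by
  classical
  have hne : ∀ τ ∈ clos H, τ.Nonempty := fun τ hτ => hτ.1
  obtain ⟨-, σ, hσ, hlast⟩ := hl.2.2 _ (List.getLast_mem hl.1)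
  obtain ⟨l', hcov, htop, hsub⟩ := exists_isChain_covBy_cons_sublist
    (isChain_lt_empty_cons hne hl) (by rwa [List.getLast_cons hl.1] : _ ≤ σ)
  have hl' : l' ≠ [] := fun h => hl.1 (List.sublist_nil.1 (h ▸ hsub))
  rw [List.getLast_cons hl'] at htop
  have hmem : memN (clos H) H l' :=
    memN_clos_of_isChain_lt_empty_cons (hcov.imp fun _ _ h => h.lt) hl' (by rwa [htop])
  exact ⟨l', isSucc_of_isChain_covBy hne hmem hcov, hsub⟩

theorem statement9_general (H : Set (Finset V)) (l : List (Finset V)) :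
    (l ≠ [] ∧ ∃ l' : List (Finset V), hypConIn (clos H) H l' ∧ l.Sublist l') ↔
      hypConIn (clos (clos H)) (clos H) l := by
  rw [clos_clos, hypConIn_iff_isChainIn subset_rfl]
  constructor
  · rintro ⟨hl, l', hl', hsub⟩
    exact isChainIn_of_sublist (memN_of_hypConIn hl').1 hsub hl
  · intro hl
    obtain ⟨l', hsucc, hsub⟩ := exists_isSucc_sublist hl
    exact ⟨hl.1, l', .of_succ l' hsucc, hsub⟩

end Hypergraph

/-- For every hypergraph `H`, the simplicial closure of its subdivision
equals the subdivision of its simplicial closure: `Δ(sd(H)) = sd(ΔH)`.  Here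
`sd(H) = H(P(ΔH), H)`, whose hyperedges are chains of simplices of `ΔH`; a chain `l`
belongs to `Δ(sd(H))` iff it is a nonempty subset (equivalently, a nonempty sublist) of
some hyperedge of `sd(H)`, and `sd(ΔH) = H(P(Δ(ΔH)), ΔH)`. -/
theorem statement9 {V : Type*} [DecidableEq V] [Fintype V]
    (H : Set (Finset V)) (hH : H.Nonempty) (hHne : ∀ σ ∈ H, σ.Nonempty)
    (l : List (Finset V)) :
    (l ≠ [] ∧ ∃ l' : List (Finset V), hypConIn (clos H) H l' ∧ l.Sublist l') ↔
      hypConIn (clos (clos H)) (clos H) l :=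
  statement9_general H l
end

section
/- Let H be a hypergraph, let σ ∈ H be a hyperedge with |σ| = n+1 (an n-dimensional simplex of ΔH), and let k_1,…,k_n be integers with 0 ≤ k_t ≤ n+1−t for t = 1,…,n. Then the chain Δ^σ_{k_1k_2⋯k_n} = (∂_{k_n}⋯∂_{k_1}σ)(∂_{k_{n−1}}⋯∂_{k_1}σ)⋯(∂_{k_1}σ)σ is an H-successive element of N(P(ΔH), H); in particular Δ^σ_{k_1k_2⋯k_n} ∈ sd(H). -/
section Faces

variable {V : Type*} [LinearOrder V]

/-- The `i`-th face map `∂ᵢ`: delete the `i`-th vertex of the ordered simplex `σ`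
(the vertices being listed in the order fixed on `V`). -/
def fc (σ : Finset V) (i : ℕ) : Finset V :=
  ((σ.sort (· ≤ ·)).eraseIdx i).toFinset

/-- The chain `Δ^σ_{k₁k₂⋯kₙ} = (∂_{kₙ}⋯∂_{k₁}σ)(∂_{kₙ₋₁}⋯∂_{k₁}σ)⋯(∂_{k₁}σ)σ`. -/
def deltaChain (σ : Finset V) (ks : List ℕ) : List (Finset V) :=
  (List.range (ks.length + 1)).reverse.map (fun t => (ks.take t).foldl fc σ)

end Faces

/-! The `i`-th entry of `Δ^σ_{k₁⋯kₙ}` has exactly `i + 1` vertices, since every face map removes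
one vertex and there are `n` of them for `n + 1` vertices. The `i`-th entry of any strict chain of
nonempty simplices has at least `i + 1` vertices, so a chain lying componentwise below
`Δ^σ_{k₁⋯kₙ}` agrees with it entry by entry. -/

section SuccessiveChains

variable {V : Type*} {A M : Set (Finset V)} {l l' : List (Finset V)}

theorem isComplex_clos (H : Set (Finset V)) : IsComplex (clos H) :=
  ⟨fun _ hσ => hσ.1, fun _ ⟨_, ρ, hρ, hσρ⟩ _ hτ hτσ => ⟨hτ, ρ, hρ, hτσ.trans hσρ⟩⟩

theorem lt_card_getElem_of_pairwise_ssubset (hl : l.Pairwise (· ⊂ ·))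
    (hne : ∀ τ ∈ l, τ.Nonempty) {i : ℕ} (hi : i < l.length) : i < l[i].card := by
  induction i with
  | zero => exact (hne _ (List.getElem_mem hi)).card_pos
  | succ i ih =>
    have hssubset : l[i] ⊂ l[i + 1] :=
      List.pairwise_iff_getElem.1 hl i (i + 1) _ hi i.lt_succ_self
    exact Nat.lt_of_le_of_lt (ih _) (Finset.card_lt_card hssubset)

theorem eq_of_chainLE_of_map_card_eq_range' (hle : chainLE l' l) (hl' : l'.Pairwise (· ⊂ ·))
    (hne : ∀ τ ∈ l', τ.Nonempty) (hcard : l.map Finset.card = List.range' 1 l.length) :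
    l' = l := by
  refine List.ext_getElem hle.length_eq fun i hi' hi => ?_
  have hsub : l'[i] ⊆ l[i] := hle.get hi' hi
  have hcard_i : l[i].card = i + 1 := by
    have := List.getElem_of_eq hcard (i := i) (by simpa using hi)
    simpa [add_comm] using this
  exact Finset.eq_of_subset_of_card_le hsub
    (hcard_i.trans_le (lt_card_getElem_of_pairwise_ssubset hl' hne hi'))

theorem isSucc_of_map_card_eq_range' (hA : ∀ τ ∈ A, τ.Nonempty) (hl : memN A M l)
    (hcard : l.map Finset.card = List.range' 1 l.length) : isSucc A M l :=
  ⟨hl, fun _ ⟨⟨_, hchain, hmem⟩, _⟩ ⟨hle, hne⟩ =>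
    hne (eq_of_chainLE_of_map_card_eq_range' hle hchain (fun τ hτ => hA τ (hmem τ hτ)) hcard)⟩

end SuccessiveChains

section DeltaChain

variable {V : Type*} [LinearOrder V]

theorem fc_subset (σ : Finset V) (i : ℕ) : fc σ i ⊆ σ := fun _ hx =>
  (Finset.mem_sort _).1 ((List.eraseIdx_sublist _ _).subset (List.mem_toFinset.1 hx))

theorem card_fc {σ : Finset V} {i : ℕ} (hi : i < σ.card) : (fc σ i).card = σ.card - 1 := by
  have hnodup : ((σ.sort (· ≤ ·)).eraseIdx i).Nodup :=
    (Finset.sort_nodup σ (· ≤ ·)).sublist (List.eraseIdx_sublist _ _)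
  rw [fc, List.toFinset_card_of_nodup hnodup, List.length_eraseIdx_of_lt (by simpa using hi),
    Finset.length_sort]

theorem fc_ssubset {σ : Finset V} {i : ℕ} (hi : i < σ.card) : fc σ i ⊂ σ :=
  (fc_subset σ i).ssubset_of_ne (ne_of_apply_ne Finset.card (by rw [card_fc hi]; omega))

/-- The face maps `∂_{k₁}, …, ∂_{kₙ}` can be applied to `σ` in this order so that each index `kₜ`
names an actual vertex of `∂_{kₜ₋₁}⋯∂_{k₁}σ`; an index out of range would make `fc` delete
nothing. -/
def IsFaceSeq (σ : Finset V) : List ℕ → Prop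
  | [] => True
  | k :: ks => k < σ.card ∧ IsFaceSeq (fc σ k) ks

theorem isFaceSeq_of_getElem_add_lt_card {σ : Finset V} {ks : List ℕ}
    (hks : ∀ i (hi : i < ks.length), ks[i] + i < σ.card) : IsFaceSeq σ ks := by
  induction ks generalizing σ with
  | nil => trivial
  | cons k ks ih =>
    have hk : k < σ.card := hks 0 ks.length.succ_pos
    refine ⟨hk, ih fun i hi => ?_⟩
    have hi_succ : ks[i] + (i + 1) < σ.card := hks (i + 1) (Nat.succ_lt_succ hi)
    rw [card_fc hk]
    omega

theorem IsFaceSeq.length_le_card {σ : Finset V} {ks : List ℕ} (hks : IsFaceSeq σ ks) :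
    ks.length ≤ σ.card := by
  induction ks generalizing σ with
  | nil => exact Nat.zero_le _
  | cons k ks ih =>
    have hlen : ks.length ≤ σ.card - 1 := card_fc hks.1 ▸ ih hks.2
    have hk : k < σ.card := hks.1
    rw [List.length_cons]
    omega

theorem deltaChain_nil (σ : Finset V) : deltaChain σ [] = [σ] := rfl

theorem deltaChain_cons (σ : Finset V) (k : ℕ) (ks : List ℕ) :
    deltaChain σ (k :: ks) = deltaChain (fc σ k) ks ++ [σ] := by
  simp [deltaChain, List.range_succ_eq_map (n := ks.length + 1), Function.comp_def]

theorem length_deltaChain (σ : Finset V) (ks : List ℕ) :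
    (deltaChain σ ks).length = ks.length + 1 := by
  simp [deltaChain]

theorem deltaChain_ne_nil (σ : Finset V) (ks : List ℕ) : deltaChain σ ks ≠ [] :=
  List.ne_nil_of_length_eq_add_one (length_deltaChain σ ks)

theorem getLast_deltaChain (σ : Finset V) (ks : List ℕ) :
    (deltaChain σ ks).getLast (deltaChain_ne_nil σ ks) = σ := by
  cases ks <;> simp [deltaChain_nil, deltaChain_cons]

theorem subset_of_mem_deltaChain {σ τ : Finset V} {ks : List ℕ} (hτ : τ ∈ deltaChain σ ks) :
    τ ⊆ σ := by
  induction ks generalizing σ with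
  | nil => exact (List.mem_singleton.1 hτ).subset
  | cons k ks ih =>
    rw [deltaChain_cons, List.mem_append, List.mem_singleton] at hτ
    obtain hτ | rfl := hτ
    · exact (ih hτ).trans (fc_subset σ k)
    · rfl

theorem IsFaceSeq.pairwise_ssubset_deltaChain {σ : Finset V} {ks : List ℕ}
    (hks : IsFaceSeq σ ks) : (deltaChain σ ks).Pairwise (· ⊂ ·) := by
  induction ks generalizing σ with
  | nil => exact List.pairwise_singleton _ _
  | cons k ks ih =>
    rw [deltaChain_cons, List.pairwise_append]
    refine ⟨ih hks.2, List.pairwise_singleton _ _, fun τ hτ ρ hρ => ?_⟩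
    rw [List.mem_singleton.1 hρ]
    exact (subset_of_mem_deltaChain hτ).trans_ssubset (fc_ssubset hks.1)

theorem IsFaceSeq.map_card_deltaChain {σ : Finset V} {ks : List ℕ} (hks : IsFaceSeq σ ks) :
    (deltaChain σ ks).map Finset.card = List.range' (σ.card - ks.length) (ks.length + 1) := by
  induction ks generalizing σ with
  | nil => rfl
  | cons k ks ih =>
    have hlen : ks.length + 1 ≤ σ.card := hks.length_le_card
    rw [deltaChain_cons, List.map_append, ih hks.2, List.map_singleton, card_fc hks.1,
      List.length_cons, List.range'_1_concat (n := ks.length + 1), Nat.sub_add_cancel hlen,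
      Nat.sub_sub, add_comm 1]

theorem IsFaceSeq.memN_deltaChain {K M : Set (Finset V)} (hK : IsComplex K) {σ : Finset V}
    (hσK : σ ∈ K) (hσM : σ ∈ M) {ks : List ℕ} (hlen : ks.length < σ.card)
    (hks : IsFaceSeq σ ks) : memN K M (deltaChain σ ks) := by
  have hne : ∀ τ ∈ deltaChain σ ks, τ.Nonempty := fun τ hτ => by
    have hτ_card : τ.card ∈ List.range' (σ.card - ks.length) (ks.length + 1) :=
      hks.map_card_deltaChain ▸ List.mem_map_of_mem hτ
    exact Finset.card_pos.1 ((Nat.sub_pos_of_lt hlen).trans_le (List.mem_range'_1.1 hτ_card).1)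
  exact ⟨⟨deltaChain_ne_nil σ ks, hks.pairwise_ssubset_deltaChain,
    fun τ hτ => hK.2 σ hσK τ (hne τ hτ) (subset_of_mem_deltaChain hτ)⟩,
    deltaChain_ne_nil σ ks, (getLast_deltaChain σ ks).symm ▸ hσM⟩

theorem statement11_general {K M : Set (Finset V)} (hK : IsComplex K) {σ : Finset V}
    (hσK : σ ∈ K) (hσM : σ ∈ M) {ks : List ℕ} (hcard : σ.card = ks.length + 1)
    (hks : IsFaceSeq σ ks) :
    isSucc K M (deltaChain σ ks) ∧ hypConIn K M (deltaChain σ ks) := by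
  have hmap_card : (deltaChain σ ks).map Finset.card = List.range' 1 (deltaChain σ ks).length := by
    rw [hks.map_card_deltaChain, length_deltaChain, hcard, Nat.add_sub_cancel_left]
  have hmem : memN K M (deltaChain σ ks) :=
    hks.memN_deltaChain hK hσK hσM (hcard ▸ Nat.lt_succ_self _)
  have hsucc : isSucc K M (deltaChain σ ks) := isSucc_of_map_card_eq_range' hK.1 hmem hmap_card
  exact ⟨hsucc, .of_succ _ hsucc⟩

end DeltaChain

/-- Let `H` be a hypergraph, `σ ∈ H` a hyperedge with `|σ| = n + 1`, and
`k₁, …, kₙ` integers with `0 ≤ kₜ ≤ n + 1 − t` (for `t = 1, …, n`; with `0`-based index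
`i = t − 1` this reads `ks[i] ≤ n − i`).  Then the chain `Δ^σ_{k₁k₂⋯kₙ}` is an
`H`-successive element of `N(P(ΔH), H)`; in particular `Δ^σ_{k₁k₂⋯kₙ} ∈ sd(H)`. -/
theorem statement11 {V : Type*} [LinearOrder V] [Fintype V]
    (H : Set (Finset V)) (hH : H.Nonempty) (hHne : ∀ σ ∈ H, σ.Nonempty)
    (σ : Finset V) (hσ : σ ∈ H) (n : ℕ) (hcard : σ.card = n + 1)
    (ks : List ℕ) (hlen : ks.length = n)
    (hks : ∀ i, i < n → ks.getD i 0 ≤ n - i) :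
    isSucc (clos H) H (deltaChain σ ks) ∧ hypConIn (clos H) H (deltaChain σ ks) := by
  exact statement11_general (isComplex_clos H) ⟨hHne σ hσ, σ, hσ, subset_rfl⟩ hσ (hlen ▸ hcard)
    (isFaceSeq_of_getElem_add_lt_card fun i hi => by grind)
end
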